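/- Let d ≥ 1 be an integer, r > 2, α > 0, K ≥ 1, and s ≥ 1 real numbers. Let X̂ : ℝ^d → [0,1] be a continuously differentiable function with X̂(x) = 1 for |x| ≤ 1/2 and X̂(x) = 0 for |x| ≥ 2/3, and let X̃ : ℝ^d → [0,1] be continuous with X̃(x) = 0 for |x| ≤ 1/8 and X̃(x) = 1 for |x| ≥ 1/4. Let Ψ_p, S_p : ℝ^d → ℝ be continuously differentiable with |Ψ_p(y)| ≤ K⟨y⟩^{−(r−2)}, |∇Ψ_p(y)| ≤ K⟨y⟩^{−(r−1)}, and |S_p(y)| ≤ K⟨y⟩^{−(r−1)} for all y, where ⟨y⟩ = (1+|y|²)^{1/2}. Define E_Ψ(y) := |∇Ψ_p(y)|²( X̂(ye^{−s}) − X̂(ye^{−s})² ) + α S_p(y)²( X̂(ye^{−s}) − X̂(ye^{−s})² ) − Ψ_p(y)² |∇X̂(ye^{−s})|² e^{−2s} − α e^{−2(r−1)s} X̃(ye^{−s})² − 2Ψ_p(y) ( ∇Ψ_p(y)·∇X̂(ye^{−s}) ) X̂(ye^{−s}) e^{−s} − 2α e^{−(r−1)s} X̃(ye^{−s}) S_p(y)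 X̂(ye^{−s}). Then there is a constant C, depending only on d, r, α, K and the supremum of |∇X̂|, such that for every y ∈ ℝ^d with |y| ≤ √d · e^{s}: |E_Ψ(y)| ≤ C · 1_{|y| ≥ e^{s}/8} · ⟨y⟩^{−2(r−1)}, where 1_{|y| ≥ e^{s}/8} equals 1 if |y| ≥ e^{s}/8 and 0 otherwise. -/

import Mathlib

open scoped RealInnerProductSpace

noncomputable section

/-!
Write `B(Ψ, S) = |∇Ψ|² + α S²`. Expanding the square in `∇Ψ_d = X̂ ∇Ψ_p + e^{-s} Ψ_p ∇X̂` shows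
that `E_Ψ = X̂ B(Ψ_p, S_p) - B(Ψ_d, S_d)`. Where `|y| < e^s / 8` the damped profile coincides with
the original one and `X̂ = 1`, so the difference vanishes. Elsewhere on the torus `e^{-s} ⟨y⟩` lies
between two positive constants, so a factor `e^{-s}` is worth a factor `⟨y⟩^{-1}`, and all of
`∇Ψ_p`, `S_p`, `∇Ψ_d`, `S_d` are `O(⟨y⟩^{-(r-1)})`.
-/

variable {E : Type*} [NormedAddCommGroup E]

theorem rpow_le_max_rpow {a b t : ℝ} (ha : 0 < a) (hat : a ≤ t) (htb : t ≤ b) (p : ℝ) :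
    t ^ p ≤ max (a ^ p) (b ^ p) := by
  rcases le_total 0 p with hp | hp
  · exact le_max_of_le_right (Real.rpow_le_rpow (ha.le.trans hat) htb hp)
  · exact le_max_of_le_left (Real.rpow_le_rpow_of_nonpos ha hat hp)

/-- The Japanese bracket `⟨y⟩ = (1 + |y|²)^{1/2}`, the weight in which decay is measured. -/
def japaneseBracket (y : E) : ℝ := Real.sqrt (1 + ‖y‖ ^ 2)

theorem japaneseBracket_pos (y : E) : 0 < japaneseBracket y := by
  unfold japaneseBracket; positivity

theorem norm_le_japaneseBracket (y : E) : ‖y‖ ≤ japaneseBracket y :=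
  Real.le_sqrt_of_sq_le (le_add_of_nonneg_left zero_le_one)

theorem exp_neg_mul_japaneseBracket_le {R s : ℝ} (hs : 0 ≤ s) {y : E}
    (hy : ‖y‖ ≤ R * Real.exp s) : Real.exp (-s) * japaneseBracket y ≤ 1 + R := by
  rw [Real.exp_neg, inv_mul_le_iff₀' (Real.exp_pos s)]
  calc japaneseBracket y ≤ 1 + ‖y‖ := sqrt_one_add_norm_sq_le y
    _ ≤ Real.exp s + R * Real.exp s := add_le_add (Real.one_le_exp hs) hy
    _ = (1 + R) * Real.exp s := by ring

theorem le_exp_neg_mul_japaneseBracket {ρ s : ℝ} {y : E} (hy : Real.exp s * ρ ≤ ‖y‖) :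
    ρ ≤ Real.exp (-s) * japaneseBracket y := by
  rw [Real.exp_neg, le_inv_mul_iff₀ (Real.exp_pos s)]
  exact hy.trans (norm_le_japaneseBracket y)

theorem exp_neg_mul_le_mul_japaneseBracket_rpow {a b s : ℝ} {y : E} (ha : 0 < a)
    (hay : a ≤ Real.exp (-s) * japaneseBracket y) (hyb : Real.exp (-s) * japaneseBracket y ≤ b)
    (p : ℝ) : Real.exp (-p * s) ≤ max (a ^ p) (b ^ p) * japaneseBracket y ^ (-p) := by
  have hJ := japaneseBracket_pos y
  rw [Real.rpow_neg hJ.le, ← div_eq_mul_inv, le_div_iff₀ (Real.rpow_pos_of_pos hJ p)]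
  calc Real.exp (-p * s) * japaneseBracket y ^ p
      = (Real.exp (-s) * japaneseBracket y) ^ p := by
        rw [Real.mul_rpow (Real.exp_pos _).le hJ.le, ← Real.exp_mul, neg_mul_comm, mul_comm p]
    _ ≤ max (a ^ p) (b ^ p) := rpow_le_max_rpow ha hay hyb p

variable [InnerProductSpace ℝ E] [CompleteSpace E]

theorem gradient_mul {f g : E → ℝ} {x : E} (hf : DifferentiableAt ℝ f x)
    (hg : DifferentiableAt ℝ g x) :
    gradient (fun y => f y * g y) x = f x • gradient g x + g x • gradient f x := by
  simp only [gradient, fderiv_fun_mul hf hg, map_add, map_smulₛₗ, RCLike.conj_to_real]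

theorem gradient_comp_smul (f : E → ℝ) (c : ℝ) (x : E) :
    gradient (fun y => f (c • y)) x = c • gradient f (c • x) := by
  simp only [gradient, fderiv_comp_smul, map_smulₛₗ, RCLike.conj_to_real]

/-- The quadratic form `|∇Ψ|² + α S²` of a phase `Ψ` and an amplitude `S`, as it enters the
Hamilton-Jacobi equation for the phase. -/
def bernoulliTerm (α : ℝ) (Ψ S : E → ℝ) (y : E) : ℝ := ‖gradient Ψ y‖ ^ 2 + α * S y ^ 2

theorem abs_bernoulliTerm_le (α : ℝ) {A B : ℝ} {Ψ S : E → ℝ} {y : E} (hΨ : ‖gradient Ψ y‖ ≤ A)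
    (hS : |S y| ≤ B) : |bernoulliTerm α Ψ S y| ≤ A ^ 2 + |α| * B ^ 2 := by
  calc |bernoulliTerm α Ψ S y| ≤ |‖gradient Ψ y‖ ^ 2| + |α * S y ^ 2| := abs_add_le _ _
    _ = ‖gradient Ψ y‖ ^ 2 + |α| * |S y| ^ 2 := by simp only [abs_mul, abs_pow, abs_norm]
    _ ≤ A ^ 2 + |α| * B ^ 2 := by gcongr

/-- The damped phase `Ψ_d(y) = Ψ_p(y) X̂(y e^{-s})`, which replaces `Ψ_p` on the periodic box. -/
def dampedPhase (s : ℝ) (Xhat Ψ : E → ℝ) (y : E) : ℝ := Ψ y * Xhat (Real.exp (-s) • y)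

/-- The damped amplitude `S_d(y) = S_p(y) X̂(y e^{-s}) + e^{-(r-1)s} X̃(y e^{-s})`, which replaces
`S_p` on the periodic box and does not degenerate where `X̂` vanishes. -/
def dampedAmplitude (r s : ℝ) (Xhat Xtil S : E → ℝ) (y : E) : ℝ :=
  S y * Xhat (Real.exp (-s) • y) + Real.exp (-(r - 1) * s) * Xtil (Real.exp (-s) • y)

/-- The error `E_Ψ` which the damping produces in the phase equation, written out term by term; see
`dampingError_eq_sub` for its closed form. -/
def dampingError (α r s : ℝ) (Xhat Xtil Ψ S : E → ℝ) (y : E) : ℝ :=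
  ‖gradient Ψ y‖ ^ 2 * (Xhat (Real.exp (-s) • y) - Xhat (Real.exp (-s) • y) ^ 2)
    + α * S y ^ 2 * (Xhat (Real.exp (-s) • y) - Xhat (Real.exp (-s) • y) ^ 2)
    - Ψ y ^ 2 * ‖gradient Xhat (Real.exp (-s) • y)‖ ^ 2 * Real.exp (-2 * s)
    - α * Real.exp (-2 * (r - 1) * s) * Xtil (Real.exp (-s) • y) ^ 2
    - 2 * Ψ y * ⟪gradient Ψ y, gradient Xhat (Real.exp (-s) • y)⟫ *
        Xhat (Real.exp (-s) • y) * Real.exp (-s)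
    - 2 * α * Real.exp (-(r - 1) * s) * Xtil (Real.exp (-s) • y) * S y *
        Xhat (Real.exp (-s) • y)

theorem gradient_dampedPhase {s : ℝ} {Xhat Ψ : E → ℝ} (hX : Differentiable ℝ Xhat)
    (hΨ : Differentiable ℝ Ψ) (y : E) :
    gradient (dampedPhase s Xhat Ψ) y =
      Xhat (Real.exp (-s) • y) • gradient Ψ y +
        (Real.exp (-s) * Ψ y) • gradient Xhat (Real.exp (-s) • y) := by
  have hXs : Differentiable ℝ fun z => Xhat (Real.exp (-s) • z) := by fun_prop
  change gradient (fun z => Ψ z * Xhat (Real.exp (-s) • z)) y = _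
  rw [gradient_mul (hΨ y) (hXs y), gradient_comp_smul, smul_smul, add_comm,
    mul_comm (Ψ y)]

theorem dampingError_eq_sub {α r s : ℝ} {Xhat Xtil Ψ S : E → ℝ} (hX : Differentiable ℝ Xhat)
    (hΨ : Differentiable ℝ Ψ) (y : E) :
    dampingError α r s Xhat Xtil Ψ S y =
      Xhat (Real.exp (-s) • y) * bernoulliTerm α Ψ S y -
        bernoulliTerm α (dampedPhase s Xhat Ψ) (dampedAmplitude r s Xhat Xtil S) y := by
  have exp_two_mul (a : ℝ) : Real.exp (-2 * a) = Real.exp (-a) ^ 2 := by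
    rw [← Real.exp_nat_mul]; congr 1; push_cast; ring
  have hr : Real.exp (-2 * (r - 1) * s) = Real.exp (-(r - 1) * s) ^ 2 := by
    rw [mul_assoc, exp_two_mul, neg_mul]
  simp only [dampingError, bernoulliTerm, gradient_dampedPhase hX hΨ, dampedAmplitude,
    norm_add_sq_real, norm_smul, real_inner_smul_left, real_inner_smul_right, mul_pow,
    Real.norm_eq_abs, sq_abs, exp_two_mul s, hr]
  ring

/-- A pair of cut-offs `X̂`, `X̃` for the damping: both are bounded by one, and at radii below `ρ`
the first is `1` and the second is `0`. The constant `M` bounds `|∇X̂|`. -/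
structure IsCutoffPair (ρ M : ℝ) (Xhat Xtil : E → ℝ) : Prop where
  differentiable : Differentiable ℝ Xhat
  abs_hat_le_one : ∀ x, |Xhat x| ≤ 1
  norm_gradient_hat_le : ∀ x, ‖gradient Xhat x‖ ≤ M
  hat_eq_one : ∀ x, ‖x‖ < ρ → Xhat x = 1
  abs_tilde_le_one : ∀ x, |Xtil x| ≤ 1
  tilde_eq_zero : ∀ x, ‖x‖ < ρ → Xtil x = 0

/-- The decay bounds, with constant `K`, of a self-similar profile `(Ψ, S)` of parameter `r`. -/
structure HasProfileDecay (r K : ℝ) (Ψ S : E → ℝ) : Prop where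
  differentiable : Differentiable ℝ Ψ
  abs_phase_le : ∀ y, |Ψ y| ≤ K * japaneseBracket y ^ (-(r - 2))
  norm_gradient_phase_le : ∀ y, ‖gradient Ψ y‖ ≤ K * japaneseBracket y ^ (-(r - 1))
  abs_amplitude_le : ∀ y, |S y| ≤ K * japaneseBracket y ^ (-(r - 1))

section Damping

variable {α r s K L M Q ρ : ℝ} {Xhat Xtil Ψ S : E → ℝ} {y : E}

theorem HasProfileDecay.nonneg (h : HasProfileDecay r K Ψ S) : 0 ≤ K :=
  nonneg_of_mul_nonneg_left ((abs_nonneg _).trans (h.abs_phase_le 0))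
    (Real.rpow_pos_of_pos (japaneseBracket_pos 0) _)

theorem HasProfileDecay.exp_neg_mul_abs_phase_le (h : HasProfileDecay r K Ψ S)
    (hL : Real.exp (-s) * japaneseBracket y ≤ L) :
    Real.exp (-s) * |Ψ y| ≤ K * L * japaneseBracket y ^ (-(r - 1)) := by
  have hJ := japaneseBracket_pos y
  have hK := h.nonneg
  have hpow : japaneseBracket y ^ (-(r - 2)) =
      japaneseBracket y * japaneseBracket y ^ (-(r - 1)) := by
    rw [show -(r - 2) = 1 + -(r - 1) by ring, Real.rpow_add hJ, Real.rpow_one]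
  calc Real.exp (-s) * |Ψ y| ≤ Real.exp (-s) * (K * japaneseBracket y ^ (-(r - 2))) := by
        gcongr; exact h.abs_phase_le y
    _ = K * (Real.exp (-s) * japaneseBracket y) * japaneseBracket y ^ (-(r - 1)) := by
        rw [hpow]; ring
    _ ≤ K * L * japaneseBracket y ^ (-(r - 1)) := by gcongr

theorem norm_gradient_dampedPhase_le (hX : IsCutoffPair ρ M Xhat Xtil)
    (h : HasProfileDecay r K Ψ S) (hL : Real.exp (-s) * japaneseBracket y ≤ L) :
    ‖gradient (dampedPhase s Xhat Ψ) y‖ ≤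
      K * (1 + L * M) * japaneseBracket y ^ (-(r - 1)) := by
  have hΨ := h.exp_neg_mul_abs_phase_le hL
  calc ‖gradient (dampedPhase s Xhat Ψ) y‖
      ≤ |Xhat (Real.exp (-s) • y)| * ‖gradient Ψ y‖ +
          Real.exp (-s) * |Ψ y| * ‖gradient Xhat (Real.exp (-s) • y)‖ := by
        rw [gradient_dampedPhase hX.differentiable h.differentiable]
        refine (norm_add_le _ _).trans_eq ?_
        simp only [norm_smul, Real.norm_eq_abs, abs_mul, Real.abs_exp]
    _ ≤ 1 * (K * japaneseBracket y ^ (-(r - 1))) +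
          K * L * japaneseBracket y ^ (-(r - 1)) * M :=
        add_le_add
          (mul_le_mul (hX.abs_hat_le_one _) (h.norm_gradient_phase_le y) (norm_nonneg _)
            zero_le_one)
          (mul_le_mul hΨ (hX.norm_gradient_hat_le _) (norm_nonneg _)
            ((by positivity : 0 ≤ Real.exp (-s) * |Ψ y|).trans hΨ))
    _ = K * (1 + L * M) * japaneseBracket y ^ (-(r - 1)) := by ring

theorem abs_dampedAmplitude_le (hX : IsCutoffPair ρ M Xhat Xtil) (h : HasProfileDecay r K Ψ S)
    (hQ : Real.exp (-(r - 1) * s) ≤ Q * japaneseBracket y ^ (-(r - 1))) :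
    |dampedAmplitude r s Xhat Xtil S y| ≤ (K + Q) * japaneseBracket y ^ (-(r - 1)) := by
  calc |dampedAmplitude r s Xhat Xtil S y|
      ≤ |S y| * |Xhat (Real.exp (-s) • y)| +
          Real.exp (-(r - 1) * s) * |Xtil (Real.exp (-s) • y)| := by
        refine (abs_add_le _ _).trans_eq ?_
        simp only [abs_mul, Real.abs_exp]
    _ ≤ |S y| + Real.exp (-(r - 1) * s) :=
        add_le_add (mul_le_of_le_one_right (abs_nonneg _) (hX.abs_hat_le_one _))
          (mul_le_of_le_one_right (Real.exp_pos _).le (hX.abs_tilde_le_one _))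
    _ ≤ K * japaneseBracket y ^ (-(r - 1)) + Q * japaneseBracket y ^ (-(r - 1)) :=
        add_le_add (h.abs_amplitude_le y) hQ
    _ = (K + Q) * japaneseBracket y ^ (-(r - 1)) := by ring

theorem abs_dampingError_le (hX : IsCutoffPair ρ M Xhat Xtil) (h : HasProfileDecay r K Ψ S)
    (hL : Real.exp (-s) * japaneseBracket y ≤ L)
    (hQ : Real.exp (-(r - 1) * s) ≤ Q * japaneseBracket y ^ (-(r - 1))) :
    |dampingError α r s Xhat Xtil Ψ S y| ≤
      (K ^ 2 + |α| * K ^ 2 + (K * (1 + L * M)) ^ 2 + |α| * (K + Q) ^ 2) *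
        japaneseBracket y ^ (-(2 * (r - 1))) := by
  set G := japaneseBracket y ^ (-(r - 1)) with hG
  have hG_sq : japaneseBracket y ^ (-(2 * (r - 1))) = G ^ 2 := by
    rw [hG, ← Real.rpow_mul_natCast (japaneseBracket_pos y).le]; congr 1; push_cast; ring
  have h_profile : |bernoulliTerm α Ψ S y| ≤ (K * G) ^ 2 + |α| * (K * G) ^ 2 :=
    abs_bernoulliTerm_le α (h.norm_gradient_phase_le y) (h.abs_amplitude_le y)
  have h_damped :
      |bernoulliTerm α (dampedPhase s Xhat Ψ) (dampedAmplitude r s Xhat Xtil S) y| ≤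
        (K * (1 + L * M) * G) ^ 2 + |α| * ((K + Q) * G) ^ 2 :=
    abs_bernoulliTerm_le α (norm_gradient_dampedPhase_le hX h hL) (abs_dampedAmplitude_le hX h hQ)
  rw [dampingError_eq_sub hX.differentiable h.differentiable, hG_sq]
  calc |Xhat (Real.exp (-s) • y) * bernoulliTerm α Ψ S y -
          bernoulliTerm α (dampedPhase s Xhat Ψ) (dampedAmplitude r s Xhat Xtil S) y|
      ≤ |Xhat (Real.exp (-s) • y)| * |bernoulliTerm α Ψ S y| +
          |bernoulliTerm α (dampedPhase s Xhat Ψ) (dampedAmplitude r s Xhat Xtil S) y| := by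
        rw [← abs_mul]; exact abs_sub _ _
    _ ≤ ((K * G) ^ 2 + |α| * (K * G) ^ 2) +
          ((K * (1 + L * M) * G) ^ 2 + |α| * ((K + Q) * G) ^ 2) :=
        add_le_add ((mul_le_of_le_one_left (abs_nonneg _) (hX.abs_hat_le_one _)).trans h_profile)
          h_damped
    _ = _ := by ring

theorem dampingError_eq_zero (hX : IsCutoffPair ρ M Xhat Xtil) (hΨ : Differentiable ℝ Ψ)
    (hy : ‖y‖ < Real.exp s * ρ) : dampingError α r s Xhat Xtil Ψ S y = 0 := by
  have norm_lt {z : E} (hz : ‖z‖ < Real.exp s * ρ) : ‖Real.exp (-s) • z‖ < ρ := by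
    rwa [norm_smul, Real.norm_eq_abs, Real.abs_exp, Real.exp_neg,
      inv_mul_lt_iff₀ (Real.exp_pos s)]
  have h_phase : dampedPhase s Xhat Ψ =ᶠ[nhds y] Ψ := by
    filter_upwards [continuous_norm.continuousAt.eventually_lt_const hy] with z hz
    rw [dampedPhase, hX.hat_eq_one _ (norm_lt hz), mul_one]
  have h_amplitude : dampedAmplitude r s Xhat Xtil S y = S y := by
    rw [dampedAmplitude, hX.hat_eq_one _ (norm_lt hy), hX.tilde_eq_zero _ (norm_lt hy), mul_one,
      mul_zero, add_zero]
  rw [dampingError_eq_sub hX.differentiable hΨ, hX.hat_eq_one _ (norm_lt hy), bernoulliTerm,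
    bernoulliTerm, h_phase.gradient_eq, h_amplitude, one_mul, sub_self]

end Damping

theorem stmt3_general (r α K M R : ℝ) {ρ : ℝ} (hρ : 0 < ρ) :
    ∃ C : ℝ, 0 < C ∧ ∀ s : ℝ, 0 ≤ s → ∀ Xhat Xtil Ψ S : E → ℝ,
      IsCutoffPair ρ M Xhat Xtil → HasProfileDecay r K Ψ S → ∀ y : E, ‖y‖ ≤ R * Real.exp s →
        |dampingError α r s Xhat Xtil Ψ S y| ≤
          C * (if Real.exp s * ρ ≤ ‖y‖ then (1 : ℝ) else 0) *
            japaneseBracket y ^ (-(2 * (r - 1))) := by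
  set L := 1 + R
  set Q := max (ρ ^ (r - 1)) (L ^ (r - 1))
  -- The summand `1` only makes the constant positive when `K = α = 0`.
  refine ⟨K ^ 2 + |α| * K ^ 2 + (K * (1 + L * M)) ^ 2 + |α| * (K + Q) ^ 2 + 1, by positivity, ?_⟩
  intro s hs Xhat Xtil Ψ S hX h y hy
  split_ifs with hρy
  · have hL : Real.exp (-s) * japaneseBracket y ≤ L := exp_neg_mul_japaneseBracket_le hs hy
    have hQ := exp_neg_mul_le_mul_japaneseBracket_rpow hρ (le_exp_neg_mul_japaneseBracket hρy) hL
      (r - 1)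
    refine (abs_dampingError_le hX h hL hQ).trans ?_
    rw [mul_one]
    exact mul_le_mul_of_nonneg_right (lt_add_one _).le
      (Real.rpow_pos_of_pos (japaneseBracket_pos y) _).le
  · rw [dampingError_eq_zero hX h.differentiable (not_le.1 hρy)]
    simp

/-- estimate for the error term `E_Ψ` produced by damping the self-similar
profile with the cut-offs `X̂, X̃`. The constant `C` depends only on `d, r, α, K` and the bound
`M` on `|∇X̂|`, and the estimate holds on `|y| ≤ √d e^s` with the factor `1_{|y| ≥ e^s/8}`. -/
theorem stmt3 (d : ℕ) (hd : 1 ≤ d) (r α K M : ℝ) (hr : 2 < r) (hα : 0 < α) (hK : 1 ≤ K)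
    (hM : 0 ≤ M) :
    ∃ C : ℝ, 0 < C ∧ ∀ s : ℝ, 1 ≤ s →
      ∀ Xhat Xtil Ψp Sp : EuclideanSpace ℝ (Fin d) → ℝ,
        ContDiff ℝ 1 Xhat →
        (∀ x, Xhat x ∈ Set.Icc (0 : ℝ) 1) →
        (∀ x : EuclideanSpace ℝ (Fin d), ‖x‖ ≤ 1 / 2 → Xhat x = 1) →
        (∀ x : EuclideanSpace ℝ (Fin d), 2 / 3 ≤ ‖x‖ → Xhat x = 0) →
        (∀ x, ‖gradient Xhat x‖ ≤ M) →
        Continuous Xtil →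
        (∀ x, Xtil x ∈ Set.Icc (0 : ℝ) 1) →
        (∀ x : EuclideanSpace ℝ (Fin d), ‖x‖ ≤ 1 / 8 → Xtil x = 0) →
        (∀ x : EuclideanSpace ℝ (Fin d), 1 / 4 ≤ ‖x‖ → Xtil x = 1) →
        ContDiff ℝ 1 Ψp → ContDiff ℝ 1 Sp →
        (∀ y : EuclideanSpace ℝ (Fin d),
          |Ψp y| ≤ K * Real.sqrt (1 + ‖y‖ ^ 2) ^ (-(r - 2))) →
        (∀ y : EuclideanSpace ℝ (Fin d),
          ‖gradient Ψp y‖ ≤ K * Real.sqrt (1 + ‖y‖ ^ 2) ^ (-(r - 1))) →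
        (∀ y : EuclideanSpace ℝ (Fin d),
          |Sp y| ≤ K * Real.sqrt (1 + ‖y‖ ^ 2) ^ (-(r - 1))) →
        ∀ y : EuclideanSpace ℝ (Fin d), ‖y‖ ≤ Real.sqrt d * Real.exp s →
          |‖gradient Ψp y‖ ^ 2 *
                (Xhat (Real.exp (-s) • y) - Xhat (Real.exp (-s) • y) ^ 2)
              + α * Sp y ^ 2 *
                (Xhat (Real.exp (-s) • y) - Xhat (Real.exp (-s) • y) ^ 2)
              - Ψp y ^ 2 * ‖gradient Xhat (Real.exp (-s) • y)‖ ^ 2 * Real.exp (-2 * s)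
              - α * Real.exp (-2 * (r - 1) * s) * Xtil (Real.exp (-s) • y) ^ 2
              - 2 * Ψp y * ⟪gradient Ψp y, gradient Xhat (Real.exp (-s) • y)⟫ *
                  Xhat (Real.exp (-s) • y) * Real.exp (-s)
              - 2 * α * Real.exp (-(r - 1) * s) * Xtil (Real.exp (-s) • y) * Sp y *
                  Xhat (Real.exp (-s) • y)|
            ≤ C * (if Real.exp s / 8 ≤ ‖y‖ then (1 : ℝ) else 0) *
                Real.sqrt (1 + ‖y‖ ^ 2) ^ (-(2 * (r - 1))) := by
  obtain ⟨C, hC, hbound⟩ := stmt3_general (E := EuclideanSpace ℝ (Fin d)) r α K M (Real.sqrt d)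
    (ρ := 8⁻¹) (by norm_num)
  refine ⟨C, hC, fun s hs Xhat Xtil Ψp Sp hXhat hXhat01 hXhat1 _ hgrad _ hXtil01 hXtil0 _ hΨp _
    hΨ hgradΨ hS => hbound s (zero_le_one.trans hs) Xhat Xtil Ψp Sp ?_
      ⟨hΨp.differentiable one_ne_zero, hΨ, hgradΨ, hS⟩⟩
  have abs_le_one {t : ℝ} (ht : t ∈ Set.Icc 0 1) : |t| ≤ 1 := (abs_of_nonneg ht.1).trans_le ht.2
  exact ⟨hXhat.differentiable one_ne_zero, fun x => abs_le_one (hXhat01 x), hgrad,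
    fun x hx => hXhat1 x (by linarith), fun x => abs_le_one (hXtil01 x),
    fun x hx => hXtil0 x (by linarith)⟩
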